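/- Let A : E → ℝ be continuous with A x > 0 for all x, and let g : E → ℝ be any function. If f₁ and f₂ are twice continuously differentiable ℤⁿ-periodic functions satisfying Δ f₁ x - A x * f₁ x = g x and Δ f₂ x - A x * f₂ x = g x for all x ∈ E, then f₁ = f₂. -/

import Mathlib

/-- The Laplacian of `f` at `x`: the sum of the pure second directional derivatives of `f`
at `x` along the standard orthonormal basis directions of `EuclideanSpace ℝ (Fin n)`. -/
noncomputable def laplacian {n : ℕ} (f : EuclideanSpace ℝ (Fin n) → ℝ)
    (x : EuclideanSpace ℝ (Fin n)) : ℝ :=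
  ∑ i : Fin n, (iteratedFDeriv ℝ 2 f x)
    ![EuclideanSpace.single i (1 : ℝ), EuclideanSpace.single i (1 : ℝ)]

/-- The second derivative is nonpositive at a local maximum. -/
theorem IsLocalMax.deriv_deriv_nonpos {φ : ℝ → ℝ} {a : ℝ} (h : IsLocalMax φ a)
    (hc : ContinuousAt φ a) : deriv (deriv φ) a ≤ 0 := by
  by_contra! hpos
  have hmin : IsLocalMin φ a := isLocalMin_of_deriv_deriv_pos hpos h.deriv_eq_zero hc
  have hconst : φ =ᶠ[nhds a] fun _ => φ a := by
    filter_upwards [h, hmin] with t h₁ h₂ using le_antisymm h₁ h₂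
  have hzero : deriv (deriv φ) a = 0 := by
    rw [hconst.deriv.deriv_eq]
    simp
  exact hpos.ne' hzero

/-- The Hessian is negative semidefinite at a local maximum. -/
theorem IsLocalMax.iteratedFDeriv_two_nonpos {E : Type*} [NormedAddCommGroup E]
    [NormedSpace ℝ E] {f : E → ℝ} {x : E} (h : IsLocalMax f x) (hf : ContDiff ℝ 2 f) (v : E) :
    iteratedFDeriv ℝ 2 f x ![v, v] ≤ 0 := by
  have hline (t : ℝ) : HasDerivAt (fun t : ℝ => x + t • v) v t := by
    simpa using ((hasDerivAt_id t).smul_const v).const_add x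
  have hderiv : deriv (fun t : ℝ => f (x + t • v)) = fun t => fderiv ℝ f (x + t • v) v := by
    funext t
    exact ((hf.differentiable (by norm_num) _).hasFDerivAt.comp_hasDerivAt t (hline t)).deriv
  have hderiv₂ : deriv (deriv fun t : ℝ => f (x + t • v)) 0
      = iteratedFDeriv ℝ 2 f x ![v, v] := by
    have hdiff : Differentiable ℝ (fderiv ℝ f) :=
      (hf.fderiv_right (m := 1) (by norm_num)).differentiable (by norm_num)
    rw [hderiv, iteratedFDeriv_two_apply]
    have := (((hdiff _).hasFDerivAt.comp_hasDerivAt 0 (hline 0)).clm_apply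
      (hasDerivAt_const 0 v)).deriv
    simpa using this
  have hcont : ContinuousAt (fun t : ℝ => x + t • v) 0 := (hline 0).continuousAt
  rw [← hderiv₂]
  refine IsLocalMax.deriv_deriv_nonpos ?_ (hf.continuous.continuousAt.comp hcont)
  have htendsto : Filter.Tendsto (fun t : ℝ => x + t • v) (nhds 0) (nhds x) := by
    simpa [ContinuousAt] using hcont
  simpa [IsLocalMax, IsMaxFilter] using htendsto.eventually h

theorem laplacian_nonpos_of_isLocalMax {n : ℕ} {f : EuclideanSpace ℝ (Fin n) → ℝ}
    {x : EuclideanSpace ℝ (Fin n)} (h : IsLocalMax f x) (hf : ContDiff ℝ 2 f) :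
    laplacian f x ≤ 0 :=
  Finset.sum_nonpos fun _ _ => h.iteratedFDeriv_two_nonpos hf _

theorem laplacian_sub {n : ℕ} {f₁ f₂ : EuclideanSpace ℝ (Fin n) → ℝ}
    (hf₁ : ContDiff ℝ 2 f₁) (hf₂ : ContDiff ℝ 2 f₂) (x : EuclideanSpace ℝ (Fin n)) :
    laplacian (f₁ - f₂) x = laplacian f₁ x - laplacian f₂ x := by
  simp [laplacian, iteratedFDeriv_sub_apply hf₁.contDiffAt hf₂.contDiffAt,
    Finset.sum_sub_distrib]

/-- A continuous `ℤⁿ`-periodic function attains its maximum. -/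
theorem exists_forall_le_of_periodic {n : ℕ} {f : EuclideanSpace ℝ (Fin n) → ℝ}
    (hf : Continuous f)
    (hper : ∀ i : Fin n, Function.Periodic f (EuclideanSpace.single i (1 : ℝ))) :
    ∃ x, ∀ y, f y ≤ f x := by
  have hlattice (k : Fin n → ℤ) (s : Finset (Fin n)) :
      Function.Periodic f (∑ i ∈ s, k i • EuclideanSpace.single i (1 : ℝ)) := by
    induction s using Finset.induction_on with
    | empty => intro x; simp
    | insert i s hi ih =>
      rw [Finset.sum_insert hi]
      exact ((hper i).zsmul (k i)).add_period ih
  have hcompact : IsCompact (WithLp.toLp 2 '' Set.Icc (0 : Fin n → ℝ) 1) :=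
    isCompact_Icc.image (PiLp.continuous_toLp 2 _)
  obtain ⟨x, -, hx⟩ := hcompact.exists_isMaxOn
    ((Set.nonempty_Icc.2 zero_le_one).image _) hf.continuousOn
  refine ⟨x, fun y => ?_⟩
  have hy : y = WithLp.toLp 2 (fun i => Int.fract (y i))
      + ∑ i, ⌊y i⌋ • EuclideanSpace.single i (1 : ℝ) := by
    ext j
    simp [Finset.sum_apply, Pi.single_apply, Int.fract_add_floor]
  rw [hy, hlattice]
  exact hx ⟨_, ⟨fun i => Int.fract_nonneg _, fun i => (Int.fract_lt_one _).le⟩, rfl⟩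

/-- The maximum principle for periodic solutions of `Δ f - A f = g` with `A` positive. -/
theorem le_of_periodic_solutions {n : ℕ} {A g f₁ f₂ : EuclideanSpace ℝ (Fin n) → ℝ}
    (hApos : ∀ x, 0 < A x) (hf₁ : ContDiff ℝ 2 f₁) (hf₂ : ContDiff ℝ 2 f₂)
    (hper₁ : ∀ i : Fin n, Function.Periodic f₁ (EuclideanSpace.single i (1 : ℝ)))
    (hper₂ : ∀ i : Fin n, Function.Periodic f₂ (EuclideanSpace.single i (1 : ℝ)))
    (heq₁ : ∀ x, laplacian f₁ x - A x * f₁ x = g x)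
    (heq₂ : ∀ x, laplacian f₂ x - A x * f₂ x = g x) : f₁ ≤ f₂ := by
  obtain ⟨x, hx⟩ := exists_forall_le_of_periodic (hf₁.sub hf₂).continuous
    fun i => (hper₁ i).sub (hper₂ i)
  have hlap : laplacian (f₁ - f₂) x ≤ 0 :=
    laplacian_nonpos_of_isLocalMax (Filter.Eventually.of_forall hx) (hf₁.sub hf₂)
  rw [laplacian_sub hf₁ hf₂] at hlap
  have hmax : f₁ x - f₂ x ≤ 0 := by
    refine nonpos_of_mul_nonpos_right (a := A x) ?_ (hApos x)
    linarith [heq₁ x, heq₂ x]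
  exact fun y => sub_nonpos.1 ((hx y).trans hmax)

theorem uniqueness_of_periodic_solutions {n : ℕ} (hn : 0 < n)
    (A : EuclideanSpace ℝ (Fin n) → ℝ) (hA : Continuous A)
    (hApos : ∀ x, 0 < A x)
    (g : EuclideanSpace ℝ (Fin n) → ℝ)
    (f₁ f₂ : EuclideanSpace ℝ (Fin n) → ℝ)
    (hf₁ : ContDiff ℝ 2 f₁) (hf₂ : ContDiff ℝ 2 f₂)
    (hper₁ : ∀ (x : EuclideanSpace ℝ (Fin n)) (i : Fin n),
      f₁ (x + EuclideanSpace.single i (1 : ℝ)) = f₁ x)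
    (hper₂ : ∀ (x : EuclideanSpace ℝ (Fin n)) (i : Fin n),
      f₂ (x + EuclideanSpace.single i (1 : ℝ)) = f₂ x)
    (heq₁ : ∀ x, laplacian f₁ x - A x * f₁ x = g x)
    (heq₂ : ∀ x, laplacian f₂ x - A x * f₂ x = g x) :
    f₁ = f₂ := by
  have h₁ (i : Fin n) : Function.Periodic f₁ (EuclideanSpace.single i (1 : ℝ)) :=
    fun x => hper₁ x i
  have h₂ (i : Fin n) : Function.Periodic f₂ (EuclideanSpace.single i (1 : ℝ)) :=
    fun x => hper₂ x i
  exact le_antisymm (le_of_periodic_solutions hApos hf₁ hf₂ h₁ h₂ heq₁ heq₂)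
    (le_of_periodic_solutions hApos hf₂ hf₁ h₂ h₁ heq₂ heq₁)
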